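/- Suppose (x_n) ⊆ W is a block sequence, β < ω₁, and for every normalised block sequence (y_n) in X = [x_n] and every K ≥ 1, player I has a strategy in F^β_X to play outcomes (z_0,…,z_k) satisfying (z_0,…,z_k) ≁_K (y_0,…,y_k). Then for every normalised block sequence (y_n) in X and every K ≥ 1 there is a sequence (J_m) of finite intervals of ℕ with min J_m → ∞ such that whenever A ⊆ ℕ is infinite with 0 ∈ A and Z = [x_j : j ∉ ⋃_{m∈A} J_m], then rank(T((y_n),Z,K)) ≤ β. -/

import Mathlib

open Filter Topology

namespace Rosendal

variable {𝒲 : Type} [NormedAddCommGroup 𝒲] [NormedSpace ℝ 𝒲]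

/-- `(e n)` is a Schauder basis of the Banach space `𝒲`. -/
def IsSchauderBasis (e : ℕ → 𝒲) : Prop :=
  ∀ x : 𝒲, ∃! a : ℕ → ℝ,
    Tendsto (fun N => ∑ i ∈ Finset.range N, a i • e i) atTop (𝓝 x)

/-- `x` is a linear combination of the vectors `b i`, `i ∈ s`. -/
def SuppIn (b : ℕ → 𝒲) (x : 𝒲) (s : Finset ℕ) : Prop :=
  ∃ a : ℕ → ℝ, x = ∑ i ∈ s, a i • b i

/-- `(x i)_{i<k} ∼_K (y i)_{i<k}`. -/
def SeqEquiv (K : ℝ) (k : ℕ) (x y : ℕ → 𝒲) : Prop :=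
  ∀ a : ℕ → ℝ,
    (1 / K) * ‖∑ i ∈ Finset.range k, a i • x i‖ ≤ ‖∑ i ∈ Finset.range k, a i • y i‖ ∧
    ‖∑ i ∈ Finset.range k, a i • y i‖ ≤ K * ‖∑ i ∈ Finset.range k, a i • x i‖

/-- The outcome `l = (x 0, …, x k)` satisfies `(x 0, …, x k) ∼_K (y 0, …, y k)`. -/
def OutcomeEquiv (K : ℝ) (l : List 𝒲) (y : ℕ → 𝒲) : Prop :=
  SeqEquiv K l.length (fun i => l.getD i 0) y

/-- The outcome `l = (u 0, v 0, u 1, v 1, …, u k, v k)` satisfies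
`(u 0, …, u k) ∼_K (v 0, …, v k)`. -/
def PairOutcomeEquiv (K : ℝ) (l : List 𝒲) : Prop :=
  SeqEquiv K (l.length / 2) (fun i => l.getD (2 * i) 0) (fun i => l.getD (2 * i + 1) 0)

/-- The tree `T((x n), Y, K)`. -/
def embTree (x : ℕ → 𝒲) (Y : Set 𝒲) (K : ℝ) : Set (List 𝒲) :=
  {l | (∀ v ∈ l, v ∈ Y) ∧ SeqEquiv K l.length (fun i => l.getD i 0) x}

open Classical in
/-- The rank of a tree of finite sequences; `⊤ = ∞` if it is ill-founded. -/
noncomputable def treeRank (T : Set (List 𝒲)) : WithTop Ordinal :=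
  if h : WellFounded (fun t s : T => s.val <+: t.val ∧ s.val ≠ t.val) then
    ((⨆ s : T, Order.succ ((h.apply s).rank) : Ordinal) : WithTop Ordinal)
  else ⊤

open Classical in
/-- The embeddability index `Emb((x n), Y) = sup_{K ≥ 1} rank T((x n), Y, K)`. -/
noncomputable def embIndex (x : ℕ → 𝒲) (Y : Set 𝒲) : WithTop Ordinal :=
  if ∃ K : ℝ, 1 ≤ K ∧ treeRank (embTree x Y K) = ⊤ then ⊤
  else ((sSup {o : Ordinal | ∃ K : ℝ, 1 ≤ K ∧
      (o : WithTop Ordinal) = treeRank (embTree x Y K)} : Ordinal) : WithTop Ordinal)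

/-- `(I m)` is a sequence of successive nonempty finite intervals `I 0 < I 1 < …` of `ℕ`. -/
def IntervalSeq (I : ℕ → Finset ℕ) : Prop :=
  (∀ m, ∃ a b : ℕ, a ≤ b ∧ I m = Finset.Icc a b) ∧
  ∀ m, ∀ i ∈ I m, ∀ j ∈ I (m + 1), i < j

/-- The setting of Section 2 of the paper: a Banach space `𝒲` with a Schauder basis
`(e n)`, a countable subfield `𝔽 ⊆ ℝ` closed under the norms of finite `𝔽`-linear
combinations of the basis, and the countable `𝔽`-vector space `W` spanned by `(e n)`. -/
structure Frame (𝒲 : Type) [NormedAddCommGroup 𝒲] [NormedSpace ℝ 𝒲] : Type where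
  e : ℕ → 𝒲
  complete : CompleteSpace 𝒲
  basis : IsSchauderBasis e
  𝔽 : Subfield ℝ
  countable : (𝔽 : Set ℝ).Countable
  norm_mem : ∀ (s : Finset ℕ) (a : ℕ → ℝ), (∀ i ∈ s, a i ∈ 𝔽) →
    ‖∑ i ∈ s, a i • e i‖ ∈ 𝔽

namespace Frame

variable {𝒲 : Type} [NormedAddCommGroup 𝒲] [NormedSpace ℝ 𝒲] (ctx : Frame 𝒲)

/-- The `𝔽`-linear span of a set of vectors. -/
def fspan (S : Set 𝒲) : Set 𝒲 :=
  {v | ∃ t : Finset 𝒲, ↑t ⊆ S ∧ ∃ c : 𝒲 → ℝ, (∀ w, c w ∈ ctx.𝔽) ∧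
    v = ∑ w ∈ t, c w • w}

/-- The countable `𝔽`-vector space `W` with basis `(e n)`. -/
def W : Set 𝒲 := ctx.fspan (Set.range ctx.e)

/-- `(y n)` is a block sequence with respect to the reference block basis `(b n)`:
a sequence of nonzero vectors of the `𝔽`-span of `(b n)` with successive supports. -/
def BlockSeqRel (b y : ℕ → 𝒲) : Prop :=
  (∀ n, y n ∈ ctx.fspan (Set.range b)) ∧ (∀ n, y n ≠ 0) ∧
  ∃ D : ℕ → Finset ℕ, (∀ n, SuppIn b (y n) (D n)) ∧
    ∀ n, ∀ i ∈ D n, ∀ j ∈ D (n + 1), i < j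

/-- `(y n)` is a block sequence (with respect to the basis `(e n)` of `W`). -/
def IsBlockSeq (y : ℕ → 𝒲) : Prop := ctx.BlockSeqRel ctx.e y

/-- `Y` is a block subspace of `X`: the `𝔽`-span of an infinite block sequence of
vectors of `X`. -/
def IsBlockSubspaceOf (Y X : Set 𝒲) : Prop :=
  ∃ y : ℕ → 𝒲, ctx.IsBlockSeq y ∧ (∀ n, y n ∈ X) ∧ Y = ctx.fspan (Set.range y)

/-- `Y` is a block subspace of `W`. -/
def IsBlockSubspace (Y : Set 𝒲) : Prop := ctx.IsBlockSubspaceOf Y ctx.W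

/-- `F` is a finite-dimensional `𝔽`-subspace of `X`. -/
def IsFinDimIn (F X : Set 𝒲) : Prop :=
  ∃ t : Finset 𝒲, ↑t ⊆ X ∧ F = ctx.fspan ↑t

/-- `n < F`: every vector of `F` is supported on basis vectors of index `> n`. -/
def NatLt (n : ℕ) (F : Set 𝒲) : Prop :=
  ∀ x ∈ F, ∃ s : Finset ℕ, SuppIn ctx.e x s ∧ ∀ i ∈ s, n < i

/-- `V` is an `𝔽`-subspace of `𝒲`. -/
def IsSubspace (V : Set 𝒲) : Prop :=
  (0 : 𝒲) ∈ V ∧ (∀ u v : 𝒲, u ∈ V → v ∈ V → u + v ∈ V) ∧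
    ∀ c : ℝ, c ∈ ctx.𝔽 → ∀ v ∈ V, c • v ∈ V

/-- `V` is infinite-dimensional (not contained in a finitely generated subspace). -/
def IsInfDim (V : Set 𝒲) : Prop :=
  ¬∃ t : Finset 𝒲, V ⊆ ctx.fspan ↑t

/-- Game values of the asymptotic game `F^β_X`, for player II, computed by transfinite
recursion on the ordinal bound.  `IIWinsF X S β Facc vec` states: in the asymptotic game
below `X`, from a position where the vectors `vec` have been played and the
finite-dimensional subspaces played by II span `Facc`, and where I must now play a natural
number together with an ordinal `< β`, player II has a strategy so that the final outcome
lies in `S`. -/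
noncomputable def IIWinsF (X : Set 𝒲) (S : Set (List 𝒲)) :
    Ordinal → Set 𝒲 → List 𝒲 → Prop :=
  WellFounded.fix (C := fun _ : Ordinal => Set 𝒲 → List 𝒲 → Prop) Ordinal.lt_wf
    (fun β ih Facc vec =>
      ∀ n : ℕ, ∀ ξ : Ordinal, ∀ hξ : ξ < β,
        ∃ F : Set 𝒲, ctx.IsFinDimIn F X ∧ ctx.NatLt n F ∧
          ∃ x : 𝒲, x ≠ 0 ∧ x ∈ ctx.fspan (Facc ∪ F) ∧
            (ξ = 0 → vec ++ [x] ∈ S) ∧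
            (ξ ≠ 0 → ih ξ hξ (ctx.fspan (Facc ∪ F)) (vec ++ [x])))

/-- Player II has a strategy in the asymptotic game `F^β_X` to play an outcome in `S`. -/
noncomputable def IIStratF (X : Set 𝒲) (β : Ordinal) (S : Set (List 𝒲)) : Prop :=
  (β = 0 → ([] : List 𝒲) ∈ S) ∧ (β ≠ 0 → ctx.IIWinsF X S β (ctx.fspan ∅) [])

/-- Game values of the asymptotic game `F^β_X` for player I (who plays the integers and
the ordinals, trying to steer the outcome into `S`). -/
noncomputable def IWinsF (X : Set 𝒲) (S : Set (List 𝒲)) :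
    Ordinal → Set 𝒲 → List 𝒲 → Prop :=
  WellFounded.fix (C := fun _ : Ordinal => Set 𝒲 → List 𝒲 → Prop) Ordinal.lt_wf
    (fun β ih Facc vec =>
      ∃ n : ℕ, ∃ ξ : Ordinal, ∃ hξ : ξ < β,
        ∀ F : Set 𝒲, ctx.IsFinDimIn F X → ctx.NatLt n F →
        ∀ x : 𝒲, x ≠ 0 → x ∈ ctx.fspan (Facc ∪ F) →
          (ξ = 0 → vec ++ [x] ∈ S) ∧
          (ξ ≠ 0 → ih ξ hξ (ctx.fspan (Facc ∪ F)) (vec ++ [x])))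

/-- Player I has a strategy in the asymptotic game `F^β_X` to play an outcome in `S`. -/
noncomputable def IStratF (X : Set 𝒲) (β : Ordinal) (S : Set (List 𝒲)) : Prop :=
  (β = 0 → ([] : List 𝒲) ∈ S) ∧ (β ≠ 0 → ctx.IWinsF X S β (ctx.fspan ∅) [])

/-- Game values of the Gowers game `G^α_X` for player II. -/
noncomputable def IIWinsG (X : Set 𝒲) (S : Set (List 𝒲)) :
    Ordinal → Set 𝒲 → List 𝒲 → Prop :=
  WellFounded.fix (C := fun _ : Ordinal => Set 𝒲 → List 𝒲 → Prop) Ordinal.lt_wf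
    (fun α ih Facc vec =>
      ∀ Y : Set 𝒲, ctx.IsBlockSubspaceOf Y X →
      ∀ ξ : Ordinal, ∀ hξ : ξ < α,
        ∃ F : Set 𝒲, ctx.IsFinDimIn F Y ∧
          ∃ x : 𝒲, x ≠ 0 ∧ x ∈ ctx.fspan (Facc ∪ F) ∧
            (ξ = 0 → vec ++ [x] ∈ S) ∧
            (ξ ≠ 0 → ih ξ hξ (ctx.fspan (Facc ∪ F)) (vec ++ [x])))

/-- Player II has a strategy in the generalised Gowers game `G^α_X` to play in `S`. -/
noncomputable def IIStratG (X : Set 𝒲) (α : Ordinal) (S : Set (List 𝒲)) : Prop :=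
  (α = 0 → ([] : List 𝒲) ∈ S) ∧ (α ≠ 0 → ctx.IIWinsG X S α (ctx.fspan ∅) [])

/-- Game values of the adversarial game `A^α_X` for player II (who plays the integers,
the finite-dimensional subspaces `F_l ⊆ Y_l` and the vectors `y_l`). -/
noncomputable def IIWinsA (X : Set 𝒲) (S : Set (List 𝒲)) :
    Ordinal → Set 𝒲 → Set 𝒲 → List 𝒲 → Prop :=
  WellFounded.fix (C := fun _ : Ordinal => Set 𝒲 → Set 𝒲 → List 𝒲 → Prop)
    Ordinal.lt_wf
    (fun α ih Eacc Facc vec =>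
      ∃ n : ℕ,
        ∀ E : Set 𝒲, ctx.IsFinDimIn E X → ctx.NatLt n E →
        ∀ x : 𝒲, x ≠ 0 → x ∈ ctx.fspan (Eacc ∪ E) →
        ∀ Y : Set 𝒲, ctx.IsBlockSubspaceOf Y X →
        ∀ ξ : Ordinal, ∀ hξ : ξ < α,
          ∃ F : Set 𝒲, ctx.IsFinDimIn F Y ∧
            ∃ y : 𝒲, y ≠ 0 ∧ y ∈ ctx.fspan (Facc ∪ F) ∧
              (ξ = 0 → vec ++ [x, y] ∈ S) ∧
              (ξ ≠ 0 → ih ξ hξ (ctx.fspan (Eacc ∪ E)) (ctx.fspan (Facc ∪ F))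
                (vec ++ [x, y])))

/-- Player II has a strategy in the adversarial game `A^α_X` to play in `S`. -/
noncomputable def IIStratA (X : Set 𝒲) (α : Ordinal) (S : Set (List 𝒲)) : Prop :=
  (α = 0 → ([] : List 𝒲) ∈ S) ∧
  (α ≠ 0 → ctx.IIWinsA X S α (ctx.fspan ∅) (ctx.fspan ∅) [])

/-- Game values of the adversarial game `B^α_X` for player I (who plays the
finite-dimensional subspaces `E_l ⊆ Y_l`, the vectors `x_l`, the integers and the
ordinals). -/
noncomputable def IWinsB (X : Set 𝒲) (S : Set (List 𝒲)) :
    Ordinal → Set 𝒲 → Set 𝒲 → List 𝒲 → Prop :=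
  WellFounded.fix (C := fun _ : Ordinal => Set 𝒲 → Set 𝒲 → List 𝒲 → Prop)
    Ordinal.lt_wf
    (fun α ih Eacc Facc vec =>
      ∀ Y : Set 𝒲, ctx.IsBlockSubspaceOf Y X →
        ∃ E : Set 𝒲, ctx.IsFinDimIn E Y ∧
          ∃ x : 𝒲, x ≠ 0 ∧ x ∈ ctx.fspan (Eacc ∪ E) ∧
            ∃ n : ℕ, ∃ ξ : Ordinal, ∃ hξ : ξ < α,
              ∀ F : Set 𝒲, ctx.IsFinDimIn F X → ctx.NatLt n F →
              ∀ y : 𝒲, y ≠ 0 → y ∈ ctx.fspan (Facc ∪ F) →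
                (ξ = 0 → vec ++ [x, y] ∈ S) ∧
                (ξ ≠ 0 → ih ξ hξ (ctx.fspan (Eacc ∪ E)) (ctx.fspan (Facc ∪ F))
                  (vec ++ [x, y])))

/-- Player I has a strategy in the adversarial game `B^α_X` to play in `S`. -/
noncomputable def IStratB (X : Set 𝒲) (α : Ordinal) (S : Set (List 𝒲)) : Prop :=
  (α = 0 → ([] : List 𝒲) ∈ S) ∧
  (α ≠ 0 → ctx.IWinsB X S α (ctx.fspan ∅) (ctx.fspan ∅) [])

/-- Game values of the adversarial game `B^α_X` for player II (who plays the block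
subspaces `Y_l`, the finite-dimensional subspaces `F_l` and the vectors `y_l`). -/
noncomputable def IIWinsB (X : Set 𝒲) (S : Set (List 𝒲)) :
    Ordinal → Set 𝒲 → Set 𝒲 → List 𝒲 → Prop :=
  WellFounded.fix (C := fun _ : Ordinal => Set 𝒲 → Set 𝒲 → List 𝒲 → Prop)
    Ordinal.lt_wf
    (fun α ih Eacc Facc vec =>
      ∃ Y : Set 𝒲, ctx.IsBlockSubspaceOf Y X ∧
        ∀ E : Set 𝒲, ctx.IsFinDimIn E Y →
        ∀ x : 𝒲, x ≠ 0 → x ∈ ctx.fspan (Eacc ∪ E) →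
        ∀ n : ℕ, ∀ ξ : Ordinal, ∀ hξ : ξ < α,
          ∃ F : Set 𝒲, ctx.IsFinDimIn F X ∧ ctx.NatLt n F ∧
            ∃ y : 𝒲, y ≠ 0 ∧ y ∈ ctx.fspan (Facc ∪ F) ∧
              (ξ = 0 → vec ++ [x, y] ∈ S) ∧
              (ξ ≠ 0 → ih ξ hξ (ctx.fspan (Eacc ∪ E)) (ctx.fspan (Facc ∪ F))
                (vec ++ [x, y])))

/-- Player II has a strategy in the adversarial game `B^α_X` to play in `S`. -/
noncomputable def IIStratB (X : Set 𝒲) (α : Ordinal) (S : Set (List 𝒲)) : Prop :=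
  (α = 0 → ([] : List 𝒲) ∈ S) ∧
  (α ≠ 0 → ctx.IIWinsB X S α (ctx.fspan ∅) (ctx.fspan ∅) [])

end Frame

end Rosendal

namespace Rosendal

variable {𝒲 : Type} [NormedAddCommGroup 𝒲] [NormedSpace ℝ 𝒲]

/-- coordinate functionals are bounded -/
def CB (b : ℕ → 𝒲) : Prop :=
  ∀ l, ∃ C : ℝ, 0 < C ∧ ∀ (s : Finset ℕ) (a : ℕ → ℝ), l ∈ s → |a l| ≤ C * ‖∑ i ∈ s, a i • b i‖

theorem schauder_unique {e : ℕ → 𝒲} (he : IsSchauderBasis e) (s : Finset ℕ) (a c : ℕ → ℝ)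
    (hc : Tendsto (fun N => ∑ i ∈ Finset.range N, c i • e i) atTop (𝓝 (∑ i ∈ s, a i • e i)))
    (l : ℕ) (hl : l ∈ s) : c l = a l := by
  obtain ⟨d, _, hd⟩ := he (∑ i ∈ s, a i • e i)
  have h1 := hd c hc
  have h2 := hd (fun i => if i ∈ s then a i else 0) (by
    apply tendsto_const_nhds.congr'
    filter_upwards [eventually_ge_atTop (s.sup id + 1)] with N hN
    have hs : s ⊆ Finset.range N := by
      intro i hi
      have : i ≤ s.sup id := Finset.le_sup (f := id) hi
      simp; omega
    simp only [ite_smul, zero_smul]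
    rw [Finset.sum_ite_mem, Finset.inter_eq_right.2 hs])
  rw [h1, ← h2]; simp [hl]

theorem cb_of_schauder [CompleteSpace 𝒲] {e : ℕ → 𝒲} (he : IsSchauderBasis e) : CB e := by
  classical
  intro l
  let ev : OnePoint ℕ → C(OnePoint ℕ, 𝒲) →L[ℝ] 𝒲 := fun x => ContinuousMap.evalCLM ℝ x
  let V : Submodule ℝ C(OnePoint ℕ, 𝒲) :=
    (LinearMap.ker (ev ((0:ℕ) : OnePoint ℕ)).toLinearMap) ⊓
    ⨅ n : ℕ, (Submodule.span ℝ {e n}).comap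
      (ev ((n+1 : ℕ) : OnePoint ℕ) - ev ((n : ℕ) : OnePoint ℕ)).toLinearMap
  have hVmem : ∀ f : C(OnePoint ℕ, 𝒲), f ∈ V ↔ f ((0:ℕ) : OnePoint ℕ) = 0 ∧
      ∀ n : ℕ, f ((n+1 : ℕ) : OnePoint ℕ) - f ((n : ℕ) : OnePoint ℕ) ∈ Submodule.span ℝ {e n} := by
    intro f
    simp [V, ev, Submodule.mem_iInf]
  have hVc : IsClosed (V : Set C(OnePoint ℕ, 𝒲)) := by
    have : (V : Set C(OnePoint ℕ, 𝒲)) = {f | f ((0:ℕ) : OnePoint ℕ) = 0} ∩ ⋂ n : ℕ,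
      {f | f ((n+1 : ℕ) : OnePoint ℕ) - f ((n : ℕ) : OnePoint ℕ) ∈ (Submodule.span ℝ {e n} : Set 𝒲)} := by
      ext f
      simp only [SetLike.mem_coe, hVmem, Set.mem_inter_iff, Set.mem_ofPred_eq, Set.mem_iInter]
    rw [this]
    refine IsClosed.inter ?_ (isClosed_iInter fun n => ?_)
    · exact isClosed_eq ((ev _).continuous) continuous_const
    · exact (Submodule.closed_of_finiteDimensional _).preimage
        ((ev _).continuous.sub (ev _).continuous)
  have : CompleteSpace V := hVc.completeSpace_coe
  let L : V →L[ℝ] 𝒲 := (ev OnePoint.infty).comp V.subtypeL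
  have hsurj : Function.Surjective L := by
    intro v
    obtain ⟨a, ha, _⟩ := he v
    refine ⟨⟨OnePoint.continuousMapMkNat _ v ha, ?_⟩, ?_⟩
    · rw [hVmem]
      refine ⟨by simp [OnePoint.continuousMapMkNat, OnePoint.continuousMapMkDiscrete, OnePoint.continuousMapMk], fun n => ?_⟩
      have : (OnePoint.continuousMapMkNat _ v ha) ((n+1 : ℕ) : OnePoint ℕ) - (OnePoint.continuousMapMkNat _ v ha) ((n : ℕ) : OnePoint ℕ) = a n • e n := by
        change (∑ i ∈ Finset.range (n+1), a i • e i) - (∑ i ∈ Finset.range n, a i • e i) = _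
        rw [Finset.sum_range_succ]; simp
      rw [this]
      exact Submodule.smul_mem _ _ (Submodule.mem_span_singleton_self _)
    · rfl
  obtain ⟨C, hC, hpre⟩ := L.exists_preimage_norm_le hsurj
  have hel : e l ≠ 0 := by
    intro h0
    have := schauder_unique he {l} (fun _ => 1) (fun _ => 0) (by simp [h0]) l (by simp)
    norm_num at this
  have heln : 0 < ‖e l‖ := norm_pos_iff.2 hel
  refine ⟨2 * C / ‖e l‖, by positivity, fun s a hl => ?_⟩
  obtain ⟨⟨f, hf⟩, hfv, hfn⟩ := hpre (∑ i ∈ s, a i • e i)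
  have hf' := (hVmem f).1 hf
  have h2 := hf'.2
  simp only [Submodule.mem_span_singleton] at h2
  choose c hc using h2
  have hsum : ∀ n : ℕ, f ((n : ℕ) : OnePoint ℕ) = ∑ i ∈ Finset.range n, c i • e i := by
    intro n
    induction n with
    | zero => simpa using hf'.1
    | succ n ih => rw [Finset.sum_range_succ, ← ih, hc]; abel
  have hlim : Tendsto (fun n : ℕ => f ((n : ℕ) : OnePoint ℕ)) atTop (𝓝 (f OnePoint.infty)) := by
    have := (OnePoint.continuous_iff_from_nat (f := f)).1 f.continuous
    exact this
  have hinf : f OnePoint.infty = ∑ i ∈ s, a i • e i := hfv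
  rw [hinf] at hlim
  simp only [hsum] at hlim
  have hcl := schauder_unique he s a c hlim l hl
  have hb : ‖c l • e l‖ ≤ 2 * C * ‖∑ i ∈ s, a i • e i‖ := by
    rw [hc]
    have hfn' : ‖f‖ ≤ C * ‖∑ i ∈ s, a i • e i‖ := hfn
    calc _ ≤ ‖f ((l+1 : ℕ) : OnePoint ℕ)‖ + ‖f ((l : ℕ) : OnePoint ℕ)‖ := norm_sub_le _ _
      _ ≤ ‖f‖ + ‖f‖ := add_le_add (f.norm_coe_le_norm _) (f.norm_coe_le_norm _)
      _ ≤ _ := by linarith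
  rw [norm_smul, hcl, Real.norm_eq_abs] at hb
  rw [div_mul_eq_mul_div, le_div_iff₀ heln]
  exact hb

theorem supp_lt {b y : ℕ → 𝒲} {D : ℕ → Finset ℕ} (hy : ∀ n, y n ≠ 0)
    (hD : ∀ n, SuppIn b (y n) (D n)) (hlt : ∀ n, ∀ i ∈ D n, ∀ j ∈ D (n + 1), i < j) :
    ∀ n m, n < m → ∀ i ∈ D n, ∀ j ∈ D m, i < j := by
  have hne : ∀ n, (D n).Nonempty := by
    intro n
    rw [Finset.nonempty_iff_ne_empty]
    intro h
    obtain ⟨a, ha⟩ := hD n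
    rw [h] at ha
    exact hy n (by simpa using ha)
  intro n m hnm
  induction m, hnm using Nat.le_induction with
  | base => exact hlt n
  | succ m hm ih =>
    intro i hi j hj
    obtain ⟨k, hk⟩ := hne m
    exact (ih i hi k hk).trans (hlt m k hk j hj)

theorem supp_ge {b y : ℕ → 𝒲} {D : ℕ → Finset ℕ} (hy : ∀ n, y n ≠ 0)
    (hD : ∀ n, SuppIn b (y n) (D n)) (hlt : ∀ n, ∀ i ∈ D n, ∀ j ∈ D (n + 1), i < j) :
    ∀ n, ∀ i ∈ D n, n ≤ i := by
  have hne : ∀ n, (D n).Nonempty := by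
    intro n
    rw [Finset.nonempty_iff_ne_empty]
    intro h
    obtain ⟨a, ha⟩ := hD n
    rw [h] at ha
    exact hy n (by simpa using ha)
  intro n
  induction n with
  | zero => simp
  | succ n ih =>
    intro i hi
    obtain ⟨k, hk⟩ := hne n
    have := hlt n k hk i hi
    have := ih k hk
    omega

theorem cb_block (ctx : Frame 𝒲) {b y : ℕ → 𝒲} (hb : CB b) (hy : ctx.BlockSeqRel b y) : CB y := by
  classical
  obtain ⟨_, hy0, D, hD, hlt⟩ := hy
  have hlt' := supp_lt hy0 hD hlt
  choose c hc using hD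
  intro l
  obtain ⟨i, hi, hci⟩ : ∃ i ∈ D l, c l i ≠ 0 := by
    by_contra hcon
    push Not at hcon
    apply hy0 l
    rw [hc l]
    exact Finset.sum_eq_zero fun i hi => by rw [hcon i hi, zero_smul]
  obtain ⟨C, hC, hbd⟩ := hb i
  have hpos : 0 < |c l i| := abs_pos.2 hci
  refine ⟨C / |c l i|, by positivity, fun s a hl => ?_⟩
  have hdisj : ∀ n m, ∀ j, j ∈ D n → j ∈ D m → n = m := by
    intro n m j hn hm
    rcases lt_trichotomy n m with h | h | h
    · exact absurd (hlt' _ _ h j hn j hm) (lt_irrefl _)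
    · exact h
    · exact absurd (hlt' _ _ h j hm j hn) (lt_irrefl _)
  let A : ℕ → ℝ := fun j => ∑ n ∈ s, if j ∈ D n then a n * c n j else 0
  have hA : ∀ n ∈ s, ∀ j ∈ D n, A j = a n * c n j := by
    intro n hn j hj
    simp only [A]
    rw [Finset.sum_eq_single n]
    · simp [hj]
    · intro m _ hmn
      rw [if_neg]
      exact fun h => hmn (hdisj _ _ j h hj)
    · exact fun h => absurd hn h
  have hs : ∑ j ∈ s.biUnion D, A j • b j = ∑ n ∈ s, a n • y n := by
    rw [Finset.sum_biUnion]
    · refine Finset.sum_congr rfl fun n hn => ?_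
      rw [hc n, Finset.smul_sum]
      exact Finset.sum_congr rfl fun j hj => by rw [hA n hn j hj, mul_smul]
    · intro n _ m _ hnm
      exact Finset.disjoint_left.2 fun j h1 h2 => hnm (hdisj _ _ j h1 h2)
  have := hbd (s.biUnion D) A (Finset.mem_biUnion.2 ⟨l, hl, hi⟩)
  rw [hs, hA l hl i hi, abs_mul] at this
  rw [div_mul_eq_mul_div, le_div_iff₀ hpos]
  exact this

/-- perturbation -/
theorem seqEquiv_perturb {y : ℕ → 𝒲} {K : ℝ} (hK : 1 ≤ K) {C δ : ℕ → ℝ} (hδ0 : ∀ i, 0 < δ i)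
    (hC : ∀ l (s : Finset ℕ) (a : ℕ → ℝ), l ∈ s → |a l| ≤ C l * ‖∑ i ∈ s, a i • y i‖)
    (hδ : ∀ i, C i * δ i ≤ 1 / (2 * K) * (1 / 2) ^ (i + 1))
    {k : ℕ} {v z : ℕ → 𝒲} (hv : SeqEquiv K k v y) (hz : ∀ i < k, ‖v i - z i‖ ≤ δ i) :
    SeqEquiv (2 * K) k z y := by
  intro a
  obtain ⟨h1, h2⟩ := hv a
  set Y := ‖∑ i ∈ Finset.range k, a i • y i‖ with hY
  have hY0 : 0 ≤ Y := norm_nonneg _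
  have hK0 : 0 < K := by linarith
  have hgeo : ∑ i ∈ Finset.range k, ((1:ℝ) / 2) ^ (i + 1) ≤ 1 := by
    have : ∀ k : ℕ, ∑ i ∈ Finset.range k, ((1:ℝ) / 2) ^ (i + 1) = 1 - (1/2)^k := by
      intro k
      induction k with
      | zero => simp
      | succ k ih => rw [Finset.sum_range_succ, ih]; ring
    rw [this]
    have : (0:ℝ) ≤ (1/2)^k := by positivity
    linarith
  have hd : ‖∑ i ∈ Finset.range k, a i • v i - ∑ i ∈ Finset.range k, a i • z i‖ ≤ 1 / (2 * K) * Y := by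
    rw [← Finset.sum_sub_distrib]
    calc _ ≤ ∑ i ∈ Finset.range k, ‖a i • v i - a i • z i‖ := norm_sum_le _ _
      _ ≤ ∑ i ∈ Finset.range k, 1 / (2 * K) * (1 / 2) ^ (i + 1) * Y := by
        refine Finset.sum_le_sum fun i hi => ?_
        rw [← smul_sub, norm_smul, Real.norm_eq_abs]
        calc _ ≤ (C i * Y) * δ i := by
              apply mul_le_mul (hC i _ a hi) (hz i (Finset.mem_range.1 hi)) (norm_nonneg _)
              exact (abs_nonneg _).trans (hC i _ a hi)
          _ = (C i * δ i) * Y := by ring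
          _ ≤ _ := mul_le_mul_of_nonneg_right (hδ i) hY0
      _ = 1 / (2 * K) * Y * ∑ i ∈ Finset.range k, ((1:ℝ) / 2) ^ (i + 1) := by
        rw [Finset.mul_sum]; exact Finset.sum_congr rfl fun i _ => by ring
      _ ≤ 1 / (2 * K) * Y * 1 := by gcongr
      _ = _ := by ring
  set V := ∑ i ∈ Finset.range k, a i • v i
  set Z := ∑ i ∈ Finset.range k, a i • z i
  have t1 : ‖Z‖ ≤ ‖V‖ + ‖V - Z‖ := by
    have := norm_sub_le V (V - Z); simpa using this
  have t2 : ‖V‖ ≤ ‖Z‖ + ‖V - Z‖ := by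
    have := norm_add_le Z (V - Z); simpa using this
  have hVK : ‖V‖ ≤ K * Y := by
    rw [one_div, inv_mul_le_iff₀ hK0] at h1; exact h1
  have hVK2 : 1 / K * Y ≤ ‖V‖ := by
    rw [one_div, inv_mul_le_iff₀ hK0]; exact h2
  have e1 : 1 / (2 * K) * Y = (1 / K * Y) / 2 := by field_simp
  have e2 : 1 / (2 * K) * Y ≤ K * Y := by
    gcongr
    rw [div_le_iff₀ (by positivity)]; nlinarith
  constructor
  · rw [one_div, inv_mul_le_iff₀ (by positivity)]
    linarith
  · have : 1 / (2 * K) * Y ≤ ‖Z‖ := by linarith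
    rw [one_div, inv_mul_le_iff₀ (by positivity)] at this
    exact this

/-- finite nets -/
theorem exists_net (G : Set 𝒲) (t : Finset 𝒲) (hG : G ⊆ Submodule.span ℝ (t : Set 𝒲)) (K δ : ℝ)
    (hδ : 0 < δ) : ∃ N : Set 𝒲, N.Finite ∧ N ⊆ G ∧ (∀ z ∈ N, z ≠ 0) ∧
      ∀ v ∈ G, v ≠ 0 → ‖v‖ ≤ K → ∃ z ∈ N, ‖v - z‖ ≤ δ := by
  let E := Submodule.span ℝ (t : Set 𝒲)
  have : FiniteDimensional ℝ E := FiniteDimensional.span_finset ℝ t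
  have : ProperSpace E := FiniteDimensional.proper ℝ E
  have hc : IsCompact ((↑) '' (Metric.closedBall (0 : E) K) : Set 𝒲) :=
    (isCompact_closedBall _ _).image continuous_subtype_val
  have htb : TotallyBounded {v | v ∈ G ∧ v ≠ 0 ∧ ‖v‖ ≤ K} := by
    refine hc.totallyBounded.subset ?_
    rintro v ⟨hv, _, hn⟩
    exact ⟨⟨v, hG hv⟩, by simpa using hn, rfl⟩
  obtain ⟨N, hN, hfin, hcov⟩ := Metric.finite_approx_of_totallyBounded htb δ hδ
  refine ⟨N, hfin, fun z hz => (hN hz).1, fun z hz => (hN hz).2.1, fun v hv h0 hn => ?_⟩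
  have := hcov ⟨hv, h0, hn⟩
  simp only [Set.mem_iUnion, Metric.mem_ball, dist_eq_norm] at this
  obtain ⟨z, hz, hlt⟩ := this
  exact ⟨z, hz, hlt.le⟩

end Rosendal

namespace Rosendal

variable {𝒲 : Type} [NormedAddCommGroup 𝒲] [NormedSpace ℝ 𝒲]

noncomputable def posSeq {P : Type*} (N : P → ℕ) (p0 : P) (step : P → ℕ → ℕ → Set P) :
    ℕ → Set P
  | M => {p | M = 0 ∧ p = p0} ∪
      ⋃ m : Fin M, ⋃ p ∈ posSeq N p0 step m.1,
        step p (sSup (N '' posSeq N p0 step m.1) + m.1) M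
  termination_by M => M
  decreasing_by all_goals exact m.2

theorem exists_b {P : Type*} (N : P → ℕ) (p0 : P) (step : P → ℕ → ℕ → Set P)
    (hfin : ∀ p b M, (step p b M).Finite) :
    ∃ (b : ℕ → ℕ) (Pos : ℕ → Set P), p0 ∈ Pos 0 ∧ (∀ M, M ≤ b M) ∧
      (∀ M, ∀ p ∈ Pos M, N p ≤ b M) ∧
      ∀ m M, m < M → ∀ p ∈ Pos m, step p (b m) M ⊆ Pos M := by
  let Pos := posSeq N p0 step
  have hf : ∀ M, (Pos M).Finite := by
    intro M
    induction M using Nat.strong_induction_on with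
    | _ M ih =>
      simp only [Pos]
      rw [posSeq]
      refine Set.Finite.union ?_ ?_
      · exact (Set.finite_singleton p0).subset fun p hp => hp.2
      · exact Set.finite_iUnion fun m => (ih m.1 m.2).biUnion fun p _ => hfin _ _ _
  refine ⟨fun M => sSup (N '' Pos M) + M, Pos, ?_, ?_, ?_, ?_⟩
  · simp only [Pos]
    rw [posSeq]
    exact Or.inl ⟨rfl, rfl⟩
  · intro M; simp
  · intro M p hp
    exact (le_csSup ((hf M).image N).bddAbove ⟨p, hp, rfl⟩).trans (Nat.le_add_right _ _)
  · intro m M hm p hp q hq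
    simp only [Pos]
    rw [posSeq]
    refine Or.inr ?_
    simp only [Set.mem_iUnion]
    exact ⟨⟨m, hm⟩, p, hp, hq⟩

theorem tree_step {T : Set (List 𝒲)} (hT : ∀ s t : List 𝒲, s <+: t → t ∈ T → s ∈ T) (s : T)
    (ξ : Ordinal.{0})
    (hc : ∀ (v : 𝒲) (c : T), c.1 = s.1 ++ [v] →
      ∃ h : Acc (fun t s : T => s.val <+: t.val ∧ s.val ≠ t.val) c, h.rank < ξ) :
    ∃ h : Acc (fun t s : T => s.val <+: t.val ∧ s.val ≠ t.val) s, h.rank ≤ ξ := by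
  have key : ∀ t : T, s.val <+: t.val ∧ s.val ≠ t.val →
      ∃ h : Acc (fun t s : T => s.val <+: t.val ∧ s.val ≠ t.val) t, h.rank < ξ := by
    rintro t ⟨⟨u, hu⟩, hne⟩
    rcases u with _ | ⟨v, u⟩
    · simp at hu; exact absurd hu hne
    have hpre : s.1 ++ [v] <+: t.1 := ⟨u, by rw [← hu]; simp⟩
    obtain ⟨h, hr⟩ := hc v ⟨s.1 ++ [v], hT _ _ hpre t.2⟩ rfl
    by_cases heq : s.1 ++ [v] = t.1
    · exact hc v t heq.symm
    · exact ⟨h.inv ⟨hpre, heq⟩, (h.rank_lt_of_rel ⟨hpre, heq⟩).trans hr⟩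
  refine ⟨Acc.intro s fun t ht => (key t ht).1, ?_⟩
  rw [Acc.rank_eq]
  refine Ordinal.iSup_le fun t => ?_
  rw [Order.succ_le_iff]
  exact (key t.1 t.2).2

theorem treeRank_le {T : Set (List 𝒲)} {β : Ordinal.{0}} (h0 : [] ∈ T)
    (h : ∃ h : Acc (fun t s : T => s.val <+: t.val ∧ s.val ≠ t.val) ⟨[], h0⟩, h.rank < β) :
    treeRank T ≤ (β : WithTop Ordinal) := by
  obtain ⟨h, hr⟩ := h
  have key : ∀ t : T, ∃ h : Acc (fun t s : T => s.val <+: t.val ∧ s.val ≠ t.val) t, h.rank < β := by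
    intro t
    by_cases heq : t.1 = []
    · have : t = ⟨[], h0⟩ := Subtype.ext heq
      subst this
      exact ⟨h, hr⟩
    · have hrel : [] <+: t.1 ∧ [] ≠ t.1 := ⟨List.nil_prefix, Ne.symm heq⟩
      exact ⟨h.inv hrel, (h.rank_lt_of_rel hrel).trans hr⟩
  have hwf : WellFounded (fun t s : T => s.val <+: t.val ∧ s.val ≠ t.val) :=
    ⟨fun t => (key t).1⟩
  rw [treeRank, dif_pos hwf, WithTop.coe_le_coe]
  refine Ordinal.iSup_le fun t => ?_
  rw [Order.succ_le_iff]
  exact (key t).2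

theorem embTree_prefix {y : ℕ → 𝒲} {Y : Set 𝒲} {K : ℝ} (s t : List 𝒲) (hst : s <+: t)
    (ht : t ∈ embTree y Y K) : s ∈ embTree y Y K := by
  obtain ⟨u, rfl⟩ := hst
  obtain ⟨h1, h2⟩ := ht
  refine ⟨fun v hv => h1 v (by simp [hv]), fun a => ?_⟩
  have := h2 (fun i => if i < s.length then a i else 0)
  have e : ∀ w w' : ℕ → 𝒲, (∀ i < s.length, w i = w' i) →
      ∑ i ∈ Finset.range (s ++ u).length, (if i < s.length then a i else 0) • w i =
      ∑ i ∈ Finset.range s.length, a i • w' i := by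
    intro w w' hw
    rw [List.length_append]
    rw [Finset.sum_range_add]
    have e1 : ∑ i ∈ Finset.range u.length,
        (if s.length + i < s.length then a (s.length + i) else 0) • w (s.length + i) = 0 :=
      Finset.sum_eq_zero fun i _ => by simp
    rw [e1, add_zero]
    refine Finset.sum_congr rfl fun i hi => ?_
    have := Finset.mem_range.1 hi
    simp [this, hw i this]
  simp only [] at this
  rw [e _ _ (fun i hi => List.getD_append _ _ _ _ hi), e _ _ (fun i _ => rfl)] at this
  exact this

theorem last_norm {y : ℕ → 𝒲} {K : ℝ} (hK : 1 ≤ K) (hy : ∀ n, ‖y n‖ = 1) (s : List 𝒲) (v : 𝒲)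
    (h : SeqEquiv K (s ++ [v]).length (fun i => (s ++ [v]).getD i 0) y) : v ≠ 0 ∧ ‖v‖ ≤ K := by
  have h := h (fun i => if i = s.length then 1 else 0)
  simp only [List.length_append, List.length_singleton, Finset.sum_range_succ, ite_smul, one_smul, zero_smul] at h
  rw [Finset.sum_eq_zero, Finset.sum_eq_zero] at h
  · simp [hy] at h
    have hK0 : 0 < K := by linarith
    obtain ⟨h1, h2⟩ := h
    constructor
    · rintro rfl
      simp at h2; linarith
    · rw [inv_mul_le_iff₀ hK0] at h1; linarith
  · intro i hi
    have := Finset.mem_range.1 hi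
    rw [if_neg (by omega)]
  · intro i hi
    have := Finset.mem_range.1 hi
    rw [if_neg (by omega)]

namespace Frame
variable (ctx : Frame 𝒲)

theorem subset_fspan (S : Set 𝒲) : S ⊆ ctx.fspan S := by
  intro v hv
  exact ⟨{v}, by simpa using hv, fun _ => 1, fun _ => ctx.𝔽.one_mem, by simp⟩

theorem fspan_sub_span {S : Set 𝒲} {E : Submodule ℝ 𝒲} (h : S ⊆ E) : ctx.fspan S ⊆ E := by
  rintro v ⟨t, ht, c, _, rfl⟩
  exact Submodule.sum_mem _ fun w hw => Submodule.smul_mem _ _ (h (ht hw))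

theorem IWinsF_iff (X : Set 𝒲) (S : Set (List 𝒲)) (γ : Ordinal.{0}) (Facc : Set 𝒲) (vec : List 𝒲) :
    ctx.IWinsF X S γ Facc vec ↔ ∃ n : ℕ, ∃ ξ : Ordinal, ∃ _ : ξ < γ,
        ∀ F : Set 𝒲, ctx.IsFinDimIn F X → ctx.NatLt n F →
        ∀ x : 𝒲, x ≠ 0 → x ∈ ctx.fspan (Facc ∪ F) →
          (ξ = 0 → vec ++ [x] ∈ S) ∧
          (ξ ≠ 0 → ctx.IWinsF X S ξ (ctx.fspan (Facc ∪ F)) (vec ++ [x])) := by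
  unfold IWinsF
  rw [WellFounded.fix_eq]

theorem natLt_tail {x : ℕ → 𝒲} (hx : ctx.IsBlockSeq x) (n b M : ℕ) (hnb : n ≤ b) :
    ctx.NatLt n (ctx.fspan {v | ∃ j, b < j ∧ j < M ∧ v = x j}) := by
  classical
  obtain ⟨_, hx0, D, hD, hlt⟩ := hx
  have hge := supp_ge hx0 hD hlt
  intro v hv
  refine ⟨(Finset.Ioo b M).biUnion D, ?_, ?_⟩
  · have hsub : ({v | ∃ j, b < j ∧ j < M ∧ v = x j} : Set 𝒲) ⊆
        Submodule.span ℝ (ctx.e '' ((Finset.Ioo b M).biUnion D : Finset ℕ)) := by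
      rintro _ ⟨j, h1, h2, rfl⟩
      obtain ⟨a, ha⟩ := hD j
      rw [ha]
      refine Submodule.sum_mem _ fun i hi => Submodule.smul_mem _ _ (Submodule.subset_span ?_)
      exact ⟨i, Finset.mem_coe.2 (Finset.mem_biUnion.2 ⟨j, Finset.mem_Ioo.2 ⟨h1, h2⟩, hi⟩), rfl⟩
    have := ctx.fspan_sub_span hsub hv
    rw [SetLike.mem_coe, Submodule.mem_span_image_finset_iff_exists_fun] at this
    obtain ⟨a, ha⟩ := this
    refine ⟨fun i => if h : i ∈ (Finset.Ioo b M).biUnion D then a ⟨i, h⟩ else 0, ?_⟩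
    rw [← ha]
    refine Eq.trans ?_ (Finset.sum_coe_sort ((Finset.Ioo b M).biUnion D) (fun i =>
      (if h : i ∈ (Finset.Ioo b M).biUnion D then a ⟨i, h⟩ else 0) • ctx.e i))
    exact Finset.sum_congr rfl fun i _ => by rw [dif_pos i.2]
  · intro i hi
    obtain ⟨j, hj, hi⟩ := Finset.mem_biUnion.1 hi
    have := hge j i hi
    have := (Finset.mem_Ioo.1 hj).1
    omega

theorem finDim_tail (x : ℕ → 𝒲) (b M : ℕ) :
    ctx.IsFinDimIn (ctx.fspan {v | ∃ j, b < j ∧ j < M ∧ v = x j}) (ctx.fspan (Set.range x)) ∧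
    ∃ t : Finset 𝒲, ctx.fspan {v | ∃ j, b < j ∧ j < M ∧ v = x j} ⊆
      Submodule.span ℝ (t : Set 𝒲) := by
  classical
  have e : {v | ∃ j, b < j ∧ j < M ∧ v = x j} = (((Finset.Ioo b M).image x : Finset 𝒲) : Set 𝒲) := by
    ext v
    simp [eq_comm, and_assoc]
  refine ⟨⟨(Finset.Ioo b M).image x, ?_, by rw [e]⟩, (Finset.Ioo b M).image x, ?_⟩
  · refine Set.Subset.trans ?_ (ctx.subset_fspan _)
    intro v hv
    simp at hv
    obtain ⟨j, _, rfl⟩ := hv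
    exact ⟨j, rfl⟩
  · rw [e]
    exact ctx.fspan_sub_span Submodule.subset_span

end Frame
end Rosendal
namespace Rosendal

/-- Suppose `(x n)` is a block sequence such that, for every normalised
block sequence `(y n)` in `X = [x n]` and every `K ≥ 1`, I has a strategy in `F^β_X` to
play outcomes not `K`-equivalent to `(y n)`.  Then for every normalised block sequence
`(y n)` in `X` and `K ≥ 1` there is a sequence `(J m)` of intervals (here given by their
endpoints `a m ≤ b m`) with `min J m → ∞` such that for every infinite `A ⊆ ℕ`
containing `0`, the tree of sequences in `Z = [x j : j ∉ ⋃_{m ∈ A} J m]` that are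
`K`-equivalent to `(y n)` has rank at most `β`. -/
theorem interval_lemma
    (𝒲 : Type) [NormedAddCommGroup 𝒲] [NormedSpace ℝ 𝒲] (ctx : Frame 𝒲)
    (x : ℕ → 𝒲) (hx : ctx.IsBlockSeq x)
    (β : Ordinal) (hβ : β < (Cardinal.aleph 1).ord)
    (h : ∀ y : ℕ → 𝒲, ctx.BlockSeqRel x y → (∀ n, ‖y n‖ = 1) → ∀ K : ℝ, 1 ≤ K →
      ctx.IStratF (ctx.fspan (Set.range x)) β {l | ¬OutcomeEquiv K l y}) :
    ∀ y : ℕ → 𝒲, ctx.BlockSeqRel x y → (∀ n, ‖y n‖ = 1) → ∀ K : ℝ, 1 ≤ K →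
      ∃ a b : ℕ → ℕ, (∀ m, a m ≤ b m) ∧ Filter.Tendsto a Filter.atTop Filter.atTop ∧
        ∀ A : Set ℕ, A.Infinite → 0 ∈ A →
          treeRank (embTree y
              (ctx.fspan {v | ∃ j : ℕ, (∀ m ∈ A, j ∉ Finset.Icc (a m) (b m)) ∧ v = x j})
              K)
            ≤ (β : WithTop Ordinal) := by
  classical
  intro y hy hyn K hK
  have hcomp := ctx.complete
  have hcb : CB y := cb_block ctx (cb_block ctx (cb_of_schauder ctx.basis) hx) hy
  choose C hC0 hC using hcb
  have hK0 : 0 < K := by linarith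
  let δ : ℕ → ℝ := fun i => 1 / (2 * K) * (1 / 2) ^ (i + 1) / C i
  have hδ0 : ∀ i, 0 < δ i := fun i => by have := hC0 i; positivity
  have hδ : ∀ i, C i * δ i ≤ 1 / (2 * K) * (1 / 2) ^ (i + 1) := fun i => by
    have := hC0 i
    simp only [δ]
    rw [mul_div_cancel₀ _ this.ne']
  obtain ⟨hst0, hst1⟩ := h y hy hyn (2 * K) (by linarith)
  have hβ0 : β ≠ 0 := by
    intro h0
    refine hst0 h0 ?_
    intro a
    simp
  have hwin := hst1 hβ0
  set X := ctx.fspan (Set.range x) with hX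
  set S : Set (List 𝒲) := {l | ¬OutcomeEquiv (2 * K) l y} with hS
  -- the nets
  have hnet : ∀ (l : ℕ) (G : Set 𝒲), ∃ N : Set 𝒲, N.Finite ∧ N ⊆ G ∧ (∀ z ∈ N, z ≠ 0) ∧
      ((∃ t : Finset 𝒲, G ⊆ Submodule.span ℝ (t : Set 𝒲)) →
        ∀ v ∈ G, v ≠ 0 → ‖v‖ ≤ K → ∃ z ∈ N, ‖v - z‖ ≤ δ l) := by
    intro l G
    by_cases hG : ∃ t : Finset 𝒲, G ⊆ Submodule.span ℝ (t : Set 𝒲)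
    · obtain ⟨t, ht⟩ := hG
      obtain ⟨N, h1, h2, h3, h4⟩ := exists_net G t ht K (δ l) (hδ0 l)
      exact ⟨N, h1, h2, h3, fun _ => h4⟩
    · exact ⟨∅, Set.finite_empty, by simp, by simp, fun h => absurd h hG⟩
  choose Net hNfin hNsub hN0 hNapp using hnet
  -- the moves of player I
  have hmv : ∀ p : Ordinal.{0} × Set 𝒲 × List 𝒲, ∃ q : ℕ × Ordinal.{0},
      ctx.IWinsF X S p.1 p.2.1 p.2.2 → q.2 < p.1 ∧
        ∀ F : Set 𝒲, ctx.IsFinDimIn F X → ctx.NatLt q.1 F →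
        ∀ x : 𝒲, x ≠ 0 → x ∈ ctx.fspan (p.2.1 ∪ F) →
          (q.2 = 0 → p.2.2 ++ [x] ∈ S) ∧
          (q.2 ≠ 0 → ctx.IWinsF X S q.2 (ctx.fspan (p.2.1 ∪ F)) (p.2.2 ++ [x])) := by
    intro p
    by_cases hp : ctx.IWinsF X S p.1 p.2.1 p.2.2
    · obtain ⟨n, ξ, h1, h2⟩ := (ctx.IWinsF_iff X S _ _ _).1 hp
      exact ⟨(n, ξ), fun _ => ⟨h1, h2⟩⟩
    · exact ⟨(0, 0), fun h => absurd h hp⟩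
  choose mv hmv using hmv
  let Ft : ℕ → ℕ → Set 𝒲 := fun b M => ctx.fspan {v | ∃ j, b < j ∧ j < M ∧ v = x j}
  obtain ⟨b, Pos, hP0, hMb, hNb, hstep⟩ := exists_b (fun p => (mv p).1)
    ((β, ctx.fspan ∅, []) : Ordinal.{0} × Set 𝒲 × List 𝒲)
    (fun p b M => (fun z => ((mv p).2, ctx.fspan (p.2.1 ∪ Ft b M), p.2.2 ++ [z])) ''
      Net p.2.2.length (ctx.fspan (p.2.1 ∪ Ft b M)))
    (fun p b M => (hNfin _ _).image _)
  refine ⟨id, b, hMb, Filter.tendsto_id, fun A hAinf hA0 => ?_⟩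
  set Y := ctx.fspan {v | ∃ j : ℕ, (∀ m ∈ A, j ∉ Finset.Icc (id m) (b m)) ∧ v = x j} with hY
  have hmain : ∀ γ : Ordinal.{0}, ∀ M ∈ A, ∀ p ∈ Pos M, p.1 = γ →
      ctx.IWinsF X S p.1 p.2.1 p.2.2 →
      (∃ t : Finset 𝒲, p.2.1 ⊆ Submodule.span ℝ (t : Set 𝒲)) →
      (∀ j < M, (∀ m ∈ A, j ∉ Finset.Icc (id m) (b m)) → x j ∈ p.2.1) →
      ∀ s : embTree y Y K, s.1.length = p.2.2.length →
        (∀ i < s.1.length, ‖s.1.getD i 0 - p.2.2.getD i 0‖ ≤ δ i) →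
        ∃ h : Acc (fun t s : embTree y Y K => s.val <+: t.val ∧ s.val ≠ t.val) s, h.rank < γ := by
    intro γ
    induction γ using WellFoundedLT.induction with
    | ind γ ih =>
    intro M hM p hp hpγ hpw hpt hpx s hsl hsδ
    obtain ⟨hξ, hmove⟩ := hmv p hpw
    have hres := tree_step (T := embTree y Y K) embTree_prefix s (mv p).2 ?_
    · obtain ⟨hacc, hr⟩ := hres
      exact ⟨hacc, hpγ ▸ hr.trans_lt hξ⟩
    intro v c hc
    have hcT := c.2
    rw [hc] at hcT
    obtain ⟨hcY, hcE⟩ := hcT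
    obtain ⟨hv0, hvK⟩ := last_norm hK hyn _ _ hcE
    have hvY : v ∈ Y := hcY v (by simp)
    -- choose the next cut
    obtain ⟨M', hM'A, hMM', hM'⟩ : ∃ M' ∈ A, M < M' ∧ v ∈ ctx.fspan (p.2.1 ∪ Ft (b M) M') ∧
        (∀ j < M', (∀ m ∈ A, j ∉ Finset.Icc (id m) (b m)) →
          x j ∈ p.2.1 ∪ Ft (b M) M') := by
      have hgood : ∀ M', (∀ j < M', (∀ m ∈ A, j ∉ Finset.Icc (id m) (b m)) →
          x j ∈ p.2.1 ∪ Ft (b M) M') := by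
        intro M' j hj hjA
        by_cases hjM : j < M
        · exact Or.inl (hpx j hjM hjA)
        · refine Or.inr (ctx.subset_fspan _ ⟨j, ?_, hj, rfl⟩)
          have := hjA M hM
          simp only [Finset.mem_Icc, id] at this
          omega
      obtain ⟨t, ht, cf, hcf, hvt⟩ := hvY
      have ht' : ∀ w : 𝒲, ∃ j : ℕ, w ∈ t → (∀ m ∈ A, j ∉ Finset.Icc (id m) (b m)) ∧ w = x j := by
        intro w
        by_cases hw : w ∈ t
        · obtain ⟨j, hj⟩ := ht hw
          exact ⟨j, fun _ => hj⟩
        · exact ⟨0, fun h => absurd h hw⟩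
      choose J hJ using ht'
      obtain ⟨M', hM'A, hM'⟩ := hAinf.exists_gt (max M (t.sup J))
      refine ⟨M', hM'A, by omega, ⟨t, ?_, cf, hcf, hvt⟩, hgood M'⟩
      intro w hw
      obtain ⟨h1, h2⟩ := hJ w hw
      have : J w ≤ t.sup J := Finset.le_sup hw
      rw [h2]
      exact hgood M' _ (by omega) h1
    obtain ⟨hvG, hgood⟩ := hM'
    set F := Ft (b M) M' with hF
    have hFd := ctx.finDim_tail x (b M) M'
    have hGt : ∃ t : Finset 𝒲, ctx.fspan (p.2.1 ∪ F) ⊆ Submodule.span ℝ (t : Set 𝒲) := by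
      obtain ⟨t1, ht1⟩ := hpt
      obtain ⟨t2, ht2⟩ := hFd.2
      refine ⟨t1 ∪ t2, ctx.fspan_sub_span (Set.union_subset ?_ ?_)⟩
      · exact ht1.trans (Submodule.span_mono (by simp))
      · exact ht2.trans (Submodule.span_mono (by simp))
    obtain ⟨z, hz, hvz⟩ := hNapp p.2.2.length _ hGt v hvG hv0 hvK
    obtain ⟨hz1, hz2⟩ := hmove F hFd.1
      (ctx.natLt_tail hx _ _ _ (hNb M p hp)) z (hN0 _ _ z hz) (hNsub _ _ hz)
    have hcl : c.1.length = (p.2.2 ++ [z]).length := by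
      rw [hc]; simp [hsl]
    have hcδ : ∀ i < c.1.length, ‖c.1.getD i 0 - (p.2.2 ++ [z]).getD i 0‖ ≤ δ i := by
      intro i hi
      rw [hc] at hi ⊢
      simp only [List.length_append, List.length_singleton] at hi
      by_cases his : i < s.1.length
      · rw [List.getD_append _ _ _ _ his, List.getD_append _ _ _ _ (hsl ▸ his)]
        exact hsδ i his
      · have : i = s.1.length := by omega
        rw [List.getD_append_right _ _ _ _ (by omega), List.getD_append_right _ _ _ _ (by omega)]
        rw [this]
        simp only [hsl]
        simpa using hvz
    have hξ0 : (mv p).2 ≠ 0 := by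
      intro h0
      refine hz1 h0 ?_
      change SeqEquiv _ _ _ _
      rw [← hcl]
      exact seqEquiv_perturb hK hδ0 hC hδ c.2.2 hcδ
    have hpos : ((mv p).2, ctx.fspan (p.2.1 ∪ F), p.2.2 ++ [z]) ∈ Pos M' :=
      hstep M M' hMM' p hp ⟨z, hz, rfl⟩
    exact ih (mv p).2 (hpγ ▸ hξ) M' hM'A _ hpos rfl (hz2 hξ0) hGt
      (fun j hj hjA => ctx.subset_fspan _ (hgood j hj hjA)) c hcl hcδ
  have hnil : ([] : List 𝒲) ∈ embTree y Y K := ⟨by simp, fun a => by simp⟩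
  refine treeRank_le hnil (hmain β 0 hA0 _ hP0 rfl hwin ⟨∅, ctx.fspan_sub_span (by simp)⟩
    (by simp) ⟨[], hnil⟩ rfl (by simp))

end Rosendal
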